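/- For smooth 2π-periodic zero-mean γ one has dS(a,b) ∘ dS(a,b)*[γ] = 2π Σ_{j,k≠0} ( ∫_𝕋 ( J₁(kA(x))J₁(jA(x)) + J₁'(kA(x))J₁'(jA(x)) ) e^{i(j−k)B(x)} dx ) γ̂(j) e^{ikx}. For (a,b) = (0,0) this reduces to the diagonal operator dS(0,0)∘dS(0,0)*[γ] = 4π² Σ_{j≠0} ( J₁(jA_*)² + J₁'(jA_*)² ) γ̂(j) e^{ijx}, and dS(0,0)∘dS(0,0)* : H^{s−1}_0(𝕋) → H^s_0(𝕋) is a bounded invertible operator for every s ∈ ℝ. -/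

import Mathlib

/-!
Everything rests on `J₁`, `J₁'` being bounded by `1` and on a two-sided bound for `J₁² + J₁'²`.

For smooth `γ` of mean zero the coefficients `γ̂(j)` are absolutely summable (`summable_fcR`), so in
each coefficient of `dS(a,b) dS(a,b)*[γ]` the integral commutes with the sum over `j`
(`dS_coeff`). This gives the double-series formula, and at `(a,b) = (0,0)` orthogonality of the
exponentials leaves only the diagonal `j = k` (`Mop_zero`).

For the invertibility, the diagonal symbol has to be comparable to `⟨j⟩⁻¹`. From Bessel's equation
(`bessel_ode`), `u = √θ J₁` solves `u'' + (1 - 3/(4θ²)) u = 0`, so its energy `E = u² + u'²`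
(`besselE`) satisfies `|E'| ≤ 3/(4θ²) E`. As `3/(4θ²)` is integrable at infinity, `E` stays between
two positive multiples of `E(A)` on `[A, ∞)`, and `E(A) > 0` because otherwise `J₁` would vanish
near `0⁺` although `J₁'(0) = 1/2`. Since `E` is comparable to `θ (J₁² + J₁'²)` on `[A, ∞)`
(`bessel_bounds`), parity of `J₁` yields the bounds on the symbol for all `j ≠ 0`
(`symbol_bounds`), and those transfer to the weighted sequence norms coefficient by coefficient
(`seq_bound`).
-/

open scoped Real BigOperators
open MeasureTheory

noncomputable section

def jb (j : ℤ) : ℝ := max 1 |(j : ℝ)|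

def fc (u : ℝ → ℂ) (j : ℤ) : ℂ :=
  (1 / (2 * (π : ℂ))) * ∫ x in (0:ℝ)..(2 * π), u x * Complex.exp (-Complex.I * (j : ℂ) * (x : ℂ))

def fcR (u : ℝ → ℝ) (j : ℤ) : ℂ := fc (fun x => (u x : ℂ)) j

def sobNorm (s : ℝ) (u : ℝ → ℂ) : ℝ :=
  Real.sqrt (∑' j : ℤ, jb j ^ (2 * s) * ‖fc u j‖ ^ 2)

def memHs (s : ℝ) (u : ℝ → ℂ) : Prop :=
  Summable (fun j : ℤ => jb j ^ (2 * s) * ‖fc u j‖ ^ 2)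

def sobNormR (s : ℝ) (u : ℝ → ℝ) : ℝ := sobNorm s (fun x => (u x : ℂ))
def memHsR (s : ℝ) (u : ℝ → ℝ) : Prop := memHs s (fun x => (u x : ℂ))

def pairNorm (s : ℝ) (a b : ℝ → ℝ) : ℝ := sobNormR s a + sobNormR s b

def seqNorm (s : ℝ) (c : ℤ → ℂ) : ℝ :=
  Real.sqrt (∑' j : ℤ, jb j ^ (2 * s) * ‖c j‖ ^ 2)

def memSeq (s : ℝ) (c : ℤ → ℂ) : Prop :=
  Summable (fun j : ℤ => jb j ^ (2 * s) * ‖c j‖ ^ 2)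

def smoothPer (u : ℝ → ℝ) : Prop :=
  ContDiff ℝ (⊤ : ℕ∞) u ∧ Function.Periodic u (2 * π)

def J1 (θ : ℝ) : ℝ :=
  ((1 / (2 * (π : ℂ))) * ∫ φ in (0:ℝ)..(2 * π),
    Complex.exp (Complex.I * (θ : ℂ) * (Real.sin φ : ℂ)) * Complex.exp (-Complex.I * (φ : ℂ))).re

/-- First component of the adjoint dS(a,b)* applied to γ. -/
def dSstar1 (Astar : ℝ) (a b : ℝ → ℝ) (γ : ℝ → ℝ) (x : ℝ) : ℂ :=
  2 * (π : ℂ) * ∑' j : ℤ, if j = 0 then 0 else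
    ((deriv J1 ((j : ℝ) * (Astar + a x)) : ℝ) : ℂ) *
      Complex.exp (Complex.I * (j : ℂ) * ((x + b x : ℝ) : ℂ)) * fcR γ j

/-- Second component of the adjoint dS(a,b)* applied to γ. -/
def dSstar2 (Astar : ℝ) (a b : ℝ → ℝ) (γ : ℝ → ℝ) (x : ℝ) : ℂ :=
  2 * (π : ℂ) * Complex.I * ∑' j : ℤ, if j = 0 then 0 else
    ((J1 ((j : ℝ) * (Astar + a x)) : ℝ) : ℂ) *
      Complex.exp (Complex.I * (j : ℂ) * ((x + b x : ℝ) : ℂ)) * fcR γ j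

/-- The normal operator M(a,b) = dS(a,b) ∘ dS(a,b)*, in its explicit Fourier form. -/
def Mop (Astar : ℝ) (a b : ℝ → ℝ) (γ : ℝ → ℂ) (x : ℝ) : ℂ :=
  2 * (π : ℂ) * ∑' k : ℤ, if k = 0 then 0 else ∑' j : ℤ, if j = 0 then 0 else
    (∫ t in (0:ℝ)..(2 * π),
        ((J1 ((k : ℝ) * (Astar + a t)) * J1 ((j : ℝ) * (Astar + a t))
            + deriv J1 ((k : ℝ) * (Astar + a t)) * deriv J1 ((j : ℝ) * (Astar + a t)) : ℝ) : ℂ) *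
          Complex.exp (Complex.I * ((j : ℂ) - (k : ℂ)) * ((t + b t : ℝ) : ℂ))) *
      fc γ j * Complex.exp (Complex.I * (k : ℂ) * (x : ℂ))

/-- The linearized operator dS(a,b) acting on a pair (α,β) of complex-valued functions. -/
def dSC (Astar : ℝ) (a b : ℝ → ℝ) (α β : ℝ → ℂ) (x : ℝ) : ℂ :=
  ∑' k : ℤ, if k = 0 then 0 else
    (∫ t in (0:ℝ)..(2 * π),
        (((deriv J1 ((k : ℝ) * (Astar + a t)) : ℝ) : ℂ) * α t
            - Complex.I * ((J1 ((k : ℝ) * (Astar + a t)) : ℝ) : ℂ) * β t) *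
          Complex.exp (-Complex.I * (k : ℂ) * ((t + b t : ℝ) : ℂ))) *
      Complex.exp (Complex.I * (k : ℂ) * (x : ℂ))

/-! ### The Bessel function `J₁`: regularity, parity and differential equation -/

lemma J1_eq (θ : ℝ) :
    J1 θ = (1 / (2 * π)) * ∫ φ in (0:ℝ)..(2 * π), Real.cos (θ * Real.sin φ - φ) := by
  have h : ∀ φ : ℝ, Complex.exp (Complex.I * (θ : ℂ) * (Real.sin φ : ℂ)) *
      Complex.exp (-Complex.I * (φ : ℂ))
        = Complex.exp (((θ * Real.sin φ - φ : ℝ) : ℂ) * Complex.I) := by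
    intro φ
    rw [← Complex.exp_add]
    congr 1
    push_cast
    ring
  have hre := Complex.reCLM.intervalIntegral_comp_comm (μ := volume) (a := 0) (b := 2 * π)
    (f := fun φ : ℝ => Complex.exp (((θ * Real.sin φ - φ : ℝ) : ℂ) * Complex.I))
    (Continuous.intervalIntegrable (by fun_prop) _ _)
  simp only [Complex.reCLM_apply, Complex.exp_ofReal_mul_I_re] at hre
  unfold J1
  simp_rw [h]
  rw [hre, show (1 / (2 * (π : ℂ))) = ((1 / (2 * π) : ℝ) : ℂ) by push_cast; rfl,
    Complex.re_ofReal_mul]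

/-- The integral formula for `J₁'`. -/
def J1d (θ : ℝ) : ℝ :=
  (1 / (2 * π)) * ∫ φ in (0:ℝ)..(2 * π), -(Real.sin φ * Real.sin (θ * Real.sin φ - φ))

/-- The integral formula for `J₁''`. -/
def J1dd (θ : ℝ) : ℝ :=
  (1 / (2 * π)) * ∫ φ in (0:ℝ)..(2 * π), -(Real.sin φ ^ 2 * Real.cos (θ * Real.sin φ - φ))

lemma hasDerivAt_integral_of_bound {F F' : ℝ → ℝ → ℝ} (hF : ∀ θ, Continuous (F θ))
    (hF' : ∀ θ, Continuous (F' θ)) (hb : ∀ θ φ, |F' θ φ| ≤ 1)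
    (hd : ∀ θ φ, HasDerivAt (fun t => F t φ) (F' θ φ) θ) (θ : ℝ) :
    HasDerivAt (fun t => ∫ φ in (0:ℝ)..(2 * π), F t φ) (∫ φ in (0:ℝ)..(2 * π), F' θ φ) θ :=
  (intervalIntegral.hasDerivAt_integral_of_dominated_loc_of_deriv_le (s := Set.univ)
    (bound := fun _ => 1) Filter.univ_mem
    (Filter.Eventually.of_forall fun t => (hF t).aestronglyMeasurable)
    ((hF θ).intervalIntegrable _ _) (hF' θ).aestronglyMeasurable
    (Filter.Eventually.of_forall fun φ _ t _ => hb t φ)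
    (continuous_const.intervalIntegrable _ _)
    (Filter.Eventually.of_forall fun φ _ t _ => hd t φ)).2

lemma hasDerivAt_J1 (θ : ℝ) : HasDerivAt J1 (J1d θ) θ := by
  have hJ : J1 = fun t => (1 / (2 * π)) *
      ∫ φ in (0:ℝ)..(2 * π), Real.cos (t * Real.sin φ - φ) := funext J1_eq
  rw [hJ]
  refine (hasDerivAt_integral_of_bound
    (F := fun t φ => Real.cos (t * Real.sin φ - φ))
    (F' := fun t φ => -(Real.sin φ * Real.sin (t * Real.sin φ - φ)))
    (by intro; fun_prop) (by intro; fun_prop) ?_ ?_ θ).const_mul _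
  · intro t φ
    rw [abs_neg, abs_mul]
    exact mul_le_one₀ (Real.abs_sin_le_one _) (abs_nonneg _) (Real.abs_sin_le_one _)
  · intro t φ
    have h := (((hasDerivAt_id t).mul_const (Real.sin φ)).sub_const φ).cos
    exact h.congr_deriv (by simp only [id]; ring)

lemma hasDerivAt_J1d (θ : ℝ) : HasDerivAt J1d (J1dd θ) θ := by
  refine (hasDerivAt_integral_of_bound
    (F := fun t φ => -(Real.sin φ * Real.sin (t * Real.sin φ - φ)))
    (F' := fun t φ => -(Real.sin φ ^ 2 * Real.cos (t * Real.sin φ - φ)))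
    (by intro; fun_prop) (by intro; fun_prop) ?_ ?_ θ).const_mul _
  · intro t φ
    rw [abs_neg, abs_mul, abs_pow]
    exact mul_le_one₀ (pow_le_one₀ (abs_nonneg _) (Real.abs_sin_le_one _)) (abs_nonneg _)
      (Real.abs_cos_le_one _)
  · intro t φ
    have h := ((((hasDerivAt_id t).mul_const (Real.sin φ)).sub_const φ).sin.const_mul
      (Real.sin φ)).neg
    exact h.congr_deriv (by simp only [id]; ring)

lemma deriv_J1 : deriv J1 = J1d := funext fun θ => (hasDerivAt_J1 θ).deriv

lemma continuous_J1 : Continuous J1 :=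
  continuous_iff_continuousAt.2 fun θ => (hasDerivAt_J1 θ).continuousAt

lemma continuous_J1d : Continuous J1d :=
  continuous_iff_continuousAt.2 fun θ => (hasDerivAt_J1d θ).continuousAt

lemma abs_mean_le_one {f : ℝ → ℝ} (hf : ∀ φ, |f φ| ≤ 1) :
    |(1 / (2 * π)) * ∫ φ in (0:ℝ)..(2 * π), f φ| ≤ 1 := by
  have h := intervalIntegral.norm_integral_le_of_norm_le_const (a := 0) (b := 2 * π) (C := 1)
    (f := f) (fun φ _ => hf φ)
  have hpi := Real.two_pi_pos
  rw [sub_zero, abs_of_pos hpi, one_mul, Real.norm_eq_abs] at h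
  rw [abs_mul, abs_of_pos (by positivity : 0 < 1 / (2 * π)), one_div, inv_mul_le_iff₀ hpi, mul_one]
  exact h

lemma abs_J1_le (θ : ℝ) : |J1 θ| ≤ 1 := by
  rw [J1_eq]
  exact abs_mean_le_one fun φ => Real.abs_cos_le_one _

lemma abs_J1d_le (θ : ℝ) : |J1d θ| ≤ 1 := by
  refine abs_mean_le_one fun φ => ?_
  rw [abs_neg, abs_mul]
  exact mul_le_one₀ (Real.abs_sin_le_one _) (abs_nonneg _) (Real.abs_sin_le_one _)

/-- `J₁` is odd, by the substitution `φ ↦ φ + π`. -/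
lemma J1_neg (θ : ℝ) : J1 (-θ) = -J1 θ := by
  have hper : Function.Periodic (fun φ => Real.cos (θ * Real.sin φ - φ)) (2 * π) := by
    intro φ
    have : θ * Real.sin (φ + 2 * π) - (φ + 2 * π) = θ * Real.sin φ - φ - 2 * π := by
      rw [Real.sin_add_two_pi]; ring
    simp only [this, Real.cos_sub_two_pi]
  have h1 := hper.intervalIntegral_add_eq π 0
  have h2 := intervalIntegral.integral_comp_add_right (a := 0) (b := 2 * π)
    (fun φ => Real.cos (θ * Real.sin φ - φ)) π
  have h3 : ∀ φ : ℝ, Real.cos (θ * Real.sin (φ + π) - (φ + π))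
      = -Real.cos (-θ * Real.sin φ - φ) := by
    intro φ
    rw [Real.sin_add_pi, ← Real.cos_sub_pi]
    congr 1
    ring
  simp_rw [h3] at h2
  rw [intervalIntegral.integral_neg, zero_add, add_comm (2 * π), h1, zero_add] at h2
  rw [J1_eq, J1_eq, ← h2]
  ring

lemma J1d_neg (θ : ℝ) : J1d (-θ) = J1d θ := by
  have h := (hasDerivAt_J1 (-θ)).scomp θ (hasDerivAt_neg θ)
  have h' : J1 ∘ Neg.neg = -J1 := funext fun t => J1_neg t
  rw [h'] at h
  have := h.unique (hasDerivAt_J1 θ).neg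
  simpa using this

/-- Bessel's equation: its left side is the mean of the derivative of the periodic function
`(θ cos φ + 1) sin (θ sin φ - φ)`. -/
lemma bessel_ode (θ : ℝ) : θ ^ 2 * J1dd θ + θ * J1d θ + (θ ^ 2 - 1) * J1 θ = 0 := by
  have hd : ∀ φ : ℝ, HasDerivAt (fun φ => (θ * Real.cos φ + 1) * Real.sin (θ * Real.sin φ - φ))
      (θ ^ 2 * (-(Real.sin φ ^ 2 * Real.cos (θ * Real.sin φ - φ)))
        + θ * (-(Real.sin φ * Real.sin (θ * Real.sin φ - φ)))
        + (θ ^ 2 - 1) * Real.cos (θ * Real.sin φ - φ)) φ := by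
    intro φ
    have h := (((Real.hasDerivAt_cos φ).const_mul θ).add_const 1).mul
      ((((Real.hasDerivAt_sin φ).const_mul θ).sub (hasDerivAt_id φ)).sin)
    refine h.congr_deriv ?_
    simp only [id, Pi.sub_apply]
    linear_combination (θ ^ 2 * Real.cos (θ * Real.sin φ - φ)) * Real.sin_sq_add_cos_sq φ
  have hftc := intervalIntegral.integral_eq_sub_of_hasDerivAt (a := 0) (b := 2 * π)
    (fun φ _ => hd φ) (Continuous.intervalIntegrable (by fun_prop) _ _)
  have h0 : Real.sin (θ * Real.sin (2 * π) - 2 * π) = 0 := by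
    rw [Real.sin_two_pi, mul_zero, zero_sub, Real.sin_neg, Real.sin_two_pi, neg_zero]
  rw [h0, Real.sin_zero, mul_zero, mul_zero, sub_zero, Real.sin_zero, mul_zero, sub_zero,
    intervalIntegral.integral_add (Continuous.intervalIntegrable (by fun_prop) _ _)
      (Continuous.intervalIntegrable (by fun_prop) _ _),
    intervalIntegral.integral_add (Continuous.intervalIntegrable (by fun_prop) _ _)
      (Continuous.intervalIntegrable (by fun_prop) _ _),
    intervalIntegral.integral_const_mul, intervalIntegral.integral_const_mul,
    intervalIntegral.integral_const_mul] at hftc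
  rw [J1_eq, J1d, J1dd]
  linear_combination (1 / (2 * π)) * hftc

lemma J1_zero : J1 0 = 0 := by
  have := J1_neg 0
  rw [neg_zero] at this
  linarith

lemma J1d_zero : J1d 0 = 1 / 2 := by
  have h : ∀ φ : ℝ, -(Real.sin φ * Real.sin (0 * Real.sin φ - φ)) = Real.sin φ ^ 2 := by
    intro φ
    rw [zero_mul, zero_sub, Real.sin_neg]
    ring
  unfold J1d
  simp_rw [h]
  rw [integral_sin_sq]
  simp
  field_simp

/-! ### The Bessel energy and the two-sided bound -/

/-- The energy `u² + u'²` of `u = √θ J₁`, which solves `u'' + (1 - 3/(4θ²)) u = 0`. -/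
def besselE (θ : ℝ) : ℝ :=
  θ * J1 θ ^ 2 + θ * J1d θ ^ 2 + J1 θ * J1d θ + J1 θ ^ 2 / (4 * θ)

lemma besselE_mul (θ : ℝ) (hθ : 0 < θ) :
    θ * besselE θ = (θ * J1 θ) ^ 2 + (θ * J1d θ + J1 θ / 2) ^ 2 := by
  unfold besselE
  field_simp
  ring

lemma besselE_nonneg (θ : ℝ) (hθ : 0 < θ) : 0 ≤ besselE θ := by
  have h := besselE_mul θ hθ
  have : 0 ≤ θ * besselE θ := by rw [h]; positivity
  exact nonneg_of_mul_nonneg_right this hθ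

/-- The energy identity `(u² + u'²)' = 3/(2θ²) u u'`. -/
lemma hasDerivAt_besselE (θ : ℝ) (hθ : 0 < θ) :
    HasDerivAt besselE (3 / (2 * θ ^ 2) * (θ * J1 θ * J1d θ + J1 θ ^ 2 / 2)) θ := by
  have hJ := hasDerivAt_J1 θ
  have hJd := hasDerivAt_J1d θ
  have hid := hasDerivAt_id θ
  have h := (((hid.mul (hJ.pow 2)).add (hid.mul (hJd.pow 2))).add (hJ.mul hJd)).add
    ((hJ.pow 2).div (hid.const_mul 4) (by simp; exact hθ.ne'))
  have hdd : J1dd θ = -(J1d θ / θ) - (1 - 1 / θ ^ 2) * J1 θ := by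
    have := bessel_ode θ
    field_simp
    linear_combination this
  refine HasDerivAt.congr_deriv (h.congr_of_eventuallyEq (Filter.EventuallyEq.of_eq ?_)) ?_
  · funext t
    simp [besselE]
  · simp only [id, hdd, Pi.pow_apply]
    field_simp
    ring

lemma abs_deriv_besselE_le (θ : ℝ) (hθ : 0 < θ) :
    |3 / (2 * θ ^ 2) * (θ * J1 θ * J1d θ + J1 θ ^ 2 / 2)| ≤ 3 / (4 * θ ^ 2) * besselE θ := by
  have h := besselE_mul θ hθ
  have h2 : |θ * J1 θ * J1d θ + J1 θ ^ 2 / 2| ≤ besselE θ / 2 := by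
    rw [abs_le]
    constructor <;>
    · refine le_of_mul_le_mul_left ?_ hθ
      nlinarith [sq_nonneg (θ * J1 θ + (θ * J1d θ + J1 θ / 2)),
        sq_nonneg (θ * J1 θ - (θ * J1d θ + J1 θ / 2))]
  rw [abs_mul, abs_of_pos (by positivity : 0 < 3 / (2 * θ ^ 2))]
  calc _ ≤ 3 / (2 * θ ^ 2) * (besselE θ / 2) := by gcongr
    _ = _ := by field_simp; ring

lemma hasDerivAt_besselE_exp (σ θ : ℝ) (hθ : 0 < θ) :
    HasDerivAt (fun t => besselE t * Real.exp (σ * (3 / 4 * t⁻¹)))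
      ((3 / (2 * θ ^ 2) * (θ * J1 θ * J1d θ + J1 θ ^ 2 / 2) - σ * (3 / (4 * θ ^ 2) * besselE θ))
        * Real.exp (σ * (3 / 4 * θ⁻¹))) θ := by
  have h := (hasDerivAt_besselE θ hθ).mul
    ((((hasDerivAt_inv hθ.ne').const_mul (3 / 4 : ℝ)).const_mul σ).exp)
  refine h.congr_deriv ?_
  field_simp
  ring

/-- `|E'| ≤ 3/(4θ²) E` says that
`E e^{-3/(4θ)}` is nondecreasing on `(0, ∞)`. -/
lemma besselE_mono : MonotoneOn (fun t => besselE t * Real.exp (-1 * (3 / 4 * t⁻¹))) (Set.Ioi 0) := by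
  refine monotoneOn_of_deriv_nonneg (convex_Ioi 0)
    (fun t ht => (hasDerivAt_besselE_exp _ t ht).continuousAt.continuousWithinAt)
    (fun t ht => ?_) (fun t ht => ?_) <;> rw [interior_Ioi] at ht
  · exact (hasDerivAt_besselE_exp _ t ht).differentiableAt.differentiableWithinAt
  · rw [(hasDerivAt_besselE_exp _ t ht).deriv]
    refine mul_nonneg ?_ (Real.exp_nonneg _)
    linarith [(abs_le.1 (abs_deriv_besselE_le t ht)).1]

/-- `|E'| ≤ 3/(4θ²) E` says that
`E e^{3/(4θ)}` is nonincreasing on `(0, ∞)`. -/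
lemma besselE_anti : AntitoneOn (fun t => besselE t * Real.exp (1 * (3 / 4 * t⁻¹))) (Set.Ioi 0) := by
  refine antitoneOn_of_deriv_nonpos (convex_Ioi 0)
    (fun t ht => (hasDerivAt_besselE_exp _ t ht).continuousAt.continuousWithinAt)
    (fun t ht => ?_) (fun t ht => ?_) <;> rw [interior_Ioi] at ht
  · exact (hasDerivAt_besselE_exp _ t ht).differentiableAt.differentiableWithinAt
  · rw [(hasDerivAt_besselE_exp _ t ht).deriv]
    refine mul_nonpos_of_nonpos_of_nonneg ?_ (Real.exp_nonneg _)
    linarith [(abs_le.1 (abs_deriv_besselE_le t ht)).2]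

/-- If the energy vanished at some `A > 0`, then `J₁` would vanish on `(0, A]`, against
`J₁'(0) = 1/2`. -/
lemma besselE_pos (A : ℝ) (hA : 0 < A) : 0 < besselE A := by
  refine lt_of_le_of_ne (besselE_nonneg A hA) fun h0 => ?_
  have hz : ∀ t ∈ Set.Ioc 0 A, J1 t = 0 := by
    intro t ht
    have hm := besselE_mono (Set.mem_Ioi.2 ht.1) (Set.mem_Ioi.2 hA) ht.2
    simp only [← h0, zero_mul] at hm
    have hE : besselE t ≤ 0 := nonpos_of_mul_nonpos_left hm (Real.exp_pos _)
    have h1 := besselE_mul t ht.1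
    have h2 : (t * J1 t) ^ 2 ≤ 0 := by
      nlinarith [sq_nonneg (t * J1d t + J1 t / 2), mul_nonpos_of_nonneg_of_nonpos ht.1.le hE]
    have h3 := pow_eq_zero_iff (two_ne_zero) |>.1 (le_antisymm h2 (sq_nonneg _))
    exact (mul_eq_zero.1 h3).resolve_left ht.1.ne'
  have hd : HasDerivWithinAt J1 (1 / 2) (Set.Ici 0) 0 := by
    have := (hasDerivAt_J1 0).hasDerivWithinAt (s := Set.Ici 0)
    rwa [J1d_zero] at this
  have hd0 : HasDerivWithinAt J1 0 (Set.Ici 0) 0 := by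
    refine (hasDerivWithinAt_const (0:ℝ) (Set.Ici 0) (0:ℝ)).congr_of_eventuallyEq ?_ J1_zero
    filter_upwards [Icc_mem_nhdsGE hA] with t ht
    rcases ht.1.eq_or_lt with h | h
    · rw [← h, J1_zero]
    · exact hz t ⟨h, ht.2⟩
  have := (uniqueDiffWithinAt_Ici (0:ℝ)).eq_deriv _ hd hd0
  norm_num at this

/-- `J₁² + J₁'²` decays exactly like `1/θ` on `[A, ∞)`. -/
lemma bessel_bounds (A : ℝ) (hA : 0 < A) : ∃ c C : ℝ, 0 < c ∧ 0 < C ∧ ∀ θ, A ≤ θ →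
    c ≤ θ * (J1 θ ^ 2 + J1d θ ^ 2) ∧ θ * (J1 θ ^ 2 + J1d θ ^ 2) ≤ C := by
  have hE := besselE_pos A hA
  set K : ℝ := 2 + 1 / (2 * A ^ 2) with hK
  have hKpos : 0 < K := by positivity
  refine ⟨besselE A * Real.exp (-1 * (3 / 4 * A⁻¹)) / K, K * (besselE A * Real.exp (1 * (3 / 4 * A⁻¹))),
    by positivity, by positivity, fun θ hθ => ?_⟩
  have hθ0 : 0 < θ := hA.trans_le hθ
  have hm := besselE_mono (Set.mem_Ioi.2 hA) (Set.mem_Ioi.2 hθ0) hθ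
  have ha := besselE_anti (Set.mem_Ioi.2 hA) (Set.mem_Ioi.2 hθ0) hθ
  simp only at hm ha
  have hEθ := besselE_nonneg θ hθ0
  have h1 : besselE θ * Real.exp (-1 * (3 / 4 * θ⁻¹)) ≤ besselE θ :=
    mul_le_of_le_one_right hEθ (Real.exp_le_one_iff.2 (by
      have : 0 < θ⁻¹ := by positivity
      linarith))
  have h2 : besselE θ ≤ besselE θ * Real.exp (1 * (3 / 4 * θ⁻¹)) :=
    le_mul_of_one_le_right hEθ (Real.one_le_exp (by positivity))
  have hmul := besselE_mul θ hθ0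
  -- For `θ ≥ A`, `K = 2 + 1/(2A²)` bounds the constant `2 + 1/(2θ²)` comparing `E` with `θ (J₁² + J₁'²)`.
  have hKθ : 2 * θ ^ 2 + 1 / 2 ≤ K * θ ^ 2 := by
    have : 1 / 2 ≤ 1 / (2 * A ^ 2) * θ ^ 2 := by
      rw [div_mul_eq_mul_div, le_div_iff₀ (by positivity)]
      nlinarith
    rw [hK]; linarith
  constructor
  · rw [div_le_iff₀ hKpos]
    refine hm.trans (h1.trans ?_)
    refine le_of_mul_le_mul_left ?_ hθ0
    nlinarith [sq_nonneg (θ * J1d θ - J1 θ / 2), mul_le_mul_of_nonneg_right hKθ (sq_nonneg (J1 θ)),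
      mul_le_mul_of_nonneg_right hKθ (sq_nonneg (J1d θ)), sq_nonneg (J1d θ)]
  · refine le_trans ?_ (mul_le_mul_of_nonneg_left (h2.trans ha) hKpos.le)
    refine le_of_mul_le_mul_left ?_ (pow_pos hθ0 3)
    have e1 : θ ^ 3 * (θ * (J1 θ ^ 2 + J1d θ ^ 2))
        ≤ (2 * θ ^ 2 + 1 / 2) * ((θ * J1 θ) ^ 2 + (θ * J1d θ + J1 θ / 2) ^ 2) := by
      nlinarith [mul_nonneg (sq_nonneg θ) (sq_nonneg (θ * J1d θ + J1 θ)), sq_nonneg (θ ^ 2 * J1 θ),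
        sq_nonneg (θ * J1d θ + J1 θ / 2)]
    refine e1.trans ((mul_le_mul_of_nonneg_right hKθ (by positivity)).trans (le_of_eq ?_))
    rw [← hmul]; ring

/-! ### Fourier coefficients of smooth periodic functions -/

lemma norm_exp_I_mul (c : ℂ) (hc : c.im = 0) (x : ℝ) :
    ‖Complex.exp (Complex.I * c * (x : ℂ))‖ = 1 := by
  simp [Complex.norm_exp, hc]

/-- Integration by parts. -/
lemma fc_deriv {f f' : ℝ → ℂ} (hf : ∀ x, HasDerivAt f (f' x) x) (hc : Continuous f')
    (hper : f (2 * π) = f 0) (j : ℤ) : Complex.I * j * fc f j = fc f' j := by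
  have hfc : Continuous f := continuous_iff_continuousAt.2 fun x => (hf x).continuousAt
  have hd : ∀ x : ℝ, HasDerivAt (fun x : ℝ => f x * Complex.exp (-Complex.I * (j : ℂ) * (x : ℂ)))
      (f' x * Complex.exp (-Complex.I * (j : ℂ) * (x : ℂ))
        - Complex.I * j * (f x * Complex.exp (-Complex.I * (j : ℂ) * (x : ℂ)))) x := by
    intro x
    have h := (hf x).mul
      (((Complex.ofRealCLM.hasDerivAt (x := x)).const_mul (-Complex.I * (j : ℂ))).cexp)
    refine h.congr_deriv ?_
    simp only [Complex.ofRealCLM_apply, Complex.ofReal_one]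
    ring
  have hftc := intervalIntegral.integral_eq_sub_of_hasDerivAt (a := 0) (b := 2 * π)
    (fun x _ => hd x) (Continuous.intervalIntegrable (by fun_prop) _ _)
  have hexp : Complex.exp (-Complex.I * (j : ℂ) * ((2 * π : ℝ) : ℂ)) = 1 := by
    rw [Complex.exp_eq_one_iff]
    exact ⟨-j, by push_cast; ring⟩
  rw [hexp, hper, intervalIntegral.integral_sub (Continuous.intervalIntegrable (by fun_prop) _ _)
    (Continuous.intervalIntegrable (by fun_prop) _ _), intervalIntegral.integral_const_mul] at hftc
  simp only [Complex.ofReal_zero, mul_zero, Complex.exp_zero, sub_self] at hftc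
  unfold fc
  linear_combination (-(1 / (2 * (π : ℂ)))) * hftc

lemma norm_fc_le (f : ℝ → ℂ) (j : ℤ) :
    ‖fc f j‖ ≤ ‖(1 / (2 * (π : ℂ)))‖ * ∫ x in (0:ℝ)..(2 * π), ‖f x‖ := by
  unfold fc
  rw [norm_mul]
  gcongr
  refine (intervalIntegral.norm_integral_le_integral_norm Real.two_pi_pos.le).trans (le_of_eq ?_)
  refine intervalIntegral.integral_congr fun x _ => ?_
  simp only [norm_mul]
  rw [show -Complex.I * (j : ℂ) = Complex.I * (-j : ℂ) by ring, norm_exp_I_mul _ (by simp), mul_one]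

lemma deriv_periodic {u : ℝ → ℝ} {T : ℝ} (hu : Function.Periodic u T) :
    Function.Periodic (deriv u) T := by
  intro x
  rw [← deriv_comp_add_const, show (fun x => u (x + T)) = u from funext hu]

/-- The coefficients of a smooth function are `O(j⁻²)`, by two integrations by parts. -/
lemma summable_fcR {γ : ℝ → ℝ} (hγ : smoothPer γ) (h0 : fcR γ 0 = 0) :
    Summable fun j : ℤ => ‖fcR γ j‖ := by
  obtain ⟨hs, hp⟩ := hγ
  have hs1 : ContDiff ℝ (⊤ : ℕ∞) (deriv γ) := (contDiff_infty_iff_deriv.1 hs).2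
  have hs2 : ContDiff ℝ (⊤ : ℕ∞) (deriv (deriv γ)) := (contDiff_infty_iff_deriv.1 hs1).2
  have hd : ∀ {u : ℝ → ℝ}, ContDiff ℝ (⊤ : ℕ∞) u →
      ∀ x, HasDerivAt (fun t => (u t : ℂ)) ((deriv u x : ℝ) : ℂ) x := fun hu x =>
    ((hu.differentiable (by simp)) x).hasDerivAt.ofReal_comp
  have hper : ∀ {u : ℝ → ℝ}, Function.Periodic u (2 * π) → ((u (2 * π) : ℝ) : ℂ) = ((u 0 : ℝ) : ℂ) :=
    fun hu => by rw [← hu 0, zero_add]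
  have e1 := fc_deriv (hd hs) (Complex.continuous_ofReal.comp hs1.continuous) (hper hp)
  have e2 := fc_deriv (hd hs1) (Complex.continuous_ofReal.comp hs2.continuous)
    (hper (deriv_periodic hp))
  have hsum := (Real.summable_one_div_int_pow (p := 2)).2 (by norm_num)
  refine Summable.of_nonneg_of_le (fun _ => norm_nonneg _) (fun j => ?_)
    (hsum.mul_left (‖(1 / (2 * (π : ℂ)))‖ *
      ∫ x in (0:ℝ)..(2 * π), ‖((deriv (deriv γ) x : ℝ) : ℂ)‖))
  rcases eq_or_ne j 0 with rfl | hj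
  · simp [h0]
  · have hj2 : (0:ℝ) < (j : ℝ) ^ 2 := by positivity
    rw [mul_one_div, le_div_iff₀ hj2]
    refine le_trans (le_of_eq ?_) (norm_fc_le _ j)
    rw [← e2 j, ← e1 j, fcR, ← sq_abs (j : ℝ)]
    simp only [norm_mul, Complex.norm_I, one_mul, Complex.norm_intCast]
    ring

/-! ### The composition `dS ∘ dS*` -/

/-- Interchange of the sum in `j` and the integral in `t`, justified by `∑ |γ̂(j)| < ∞` and
`|J₁|, |J₁'| ≤ 1`. -/
lemma dS_coeff (Astar : ℝ) {a b : ℝ → ℝ} (ha : Continuous a) (hb : Continuous b) {γ : ℝ → ℝ}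
    (h0 : fcR γ 0 = 0) (hsum : Summable fun j : ℤ => ‖fcR γ j‖) (k : ℤ) :
    (∫ t in (0:ℝ)..(2 * π),
        (((deriv J1 ((k : ℝ) * (Astar + a t)) : ℝ) : ℂ) * dSstar1 Astar a b γ t
            - Complex.I * ((J1 ((k : ℝ) * (Astar + a t)) : ℝ) : ℂ) * dSstar2 Astar a b γ t) *
          Complex.exp (-Complex.I * (k : ℂ) * ((t + b t : ℝ) : ℂ)))
      = 2 * (π : ℂ) * ∑' j : ℤ, if j = 0 then 0 else
    (∫ t in (0:ℝ)..(2 * π),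
        ((J1 ((k : ℝ) * (Astar + a t)) * J1 ((j : ℝ) * (Astar + a t))
            + deriv J1 ((k : ℝ) * (Astar + a t)) * deriv J1 ((j : ℝ) * (Astar + a t)) : ℝ) : ℂ) *
          Complex.exp (Complex.I * ((j : ℂ) - (k : ℂ)) * ((t + b t : ℝ) : ℂ))) *
      fcR γ j := by
  have hJ := continuous_J1
  have hJd := continuous_J1d
  have hif : ∀ X : ℤ → ℂ, (fun j : ℤ => if j = 0 then (0:ℂ) else X j * fcR γ j)
      = fun j => X j * fcR γ j := by
    intro X
    funext j
    split_ifs with hj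
    · rw [hj, h0, mul_zero]
    · rfl
  have hS : ∀ (g : ℝ → ℝ), (∀ θ, |g θ| ≤ 1) → ∀ t : ℝ, Summable fun j : ℤ =>
      ((g ((j : ℝ) * (Astar + a t)) : ℝ) : ℂ) *
        Complex.exp (Complex.I * (j : ℂ) * ((t + b t : ℝ) : ℂ)) * fcR γ j := by
    intro g hg t
    refine Summable.of_norm_bounded hsum fun j => ?_
    rw [norm_mul, norm_mul, norm_exp_I_mul _ (by simp), mul_one, Complex.norm_real]
    exact mul_le_of_le_one_left (norm_nonneg _) (hg _)
  simp only [dSstar1, dSstar2, hif, deriv_J1]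
  have hmain := intervalIntegral.hasSum_integral_of_dominated_convergence (μ := volume)
    (a := 0) (b := 2 * π)
    (F := fun (j : ℤ) (t : ℝ) =>
      ((J1 ((k : ℝ) * (Astar + a t)) * J1 ((j : ℝ) * (Astar + a t))
            + J1d ((k : ℝ) * (Astar + a t)) * J1d ((j : ℝ) * (Astar + a t)) : ℝ) : ℂ) *
          Complex.exp (Complex.I * ((j : ℂ) - (k : ℂ)) * ((t + b t : ℝ) : ℂ)) * fcR γ j)
    (f := fun t => (((J1d ((k : ℝ) * (Astar + a t)) : ℝ) : ℂ) *
        (∑' j : ℤ, ((J1d ((j : ℝ) * (Astar + a t)) : ℝ) : ℂ) *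
          Complex.exp (Complex.I * (j : ℂ) * ((t + b t : ℝ) : ℂ)) * fcR γ j)
        + ((J1 ((k : ℝ) * (Astar + a t)) : ℝ) : ℂ) *
        (∑' j : ℤ, ((J1 ((j : ℝ) * (Astar + a t)) : ℝ) : ℂ) *
          Complex.exp (Complex.I * (j : ℂ) * ((t + b t : ℝ) : ℂ)) * fcR γ j)) *
          Complex.exp (-Complex.I * (k : ℂ) * ((t + b t : ℝ) : ℂ)))
    (fun j _ => 2 * ‖fcR γ j‖)
    (fun j => Continuous.aestronglyMeasurable (by fun_prop))
    (fun j => Filter.Eventually.of_forall fun t _ => ?_)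
    (Filter.Eventually.of_forall fun t _ => hsum.mul_left 2)
    (continuous_const.intervalIntegrable _ _)
    (Filter.Eventually.of_forall fun t _ => ?_)
  · simp only [intervalIntegral.integral_mul_const] at hmain
    rw [hmain.tsum_eq, ← intervalIntegral.integral_const_mul]
    refine intervalIntegral.integral_congr fun t _ => ?_
    linear_combination (-2 * (π : ℂ) * ((J1 ((k : ℝ) * (Astar + a t)) : ℝ) : ℂ) *
        (∑' j : ℤ, ((J1 ((j : ℝ) * (Astar + a t)) : ℝ) : ℂ) *
          Complex.exp (Complex.I * (j : ℂ) * ((t + b t : ℝ) : ℂ)) * fcR γ j) *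
          Complex.exp (-Complex.I * (k : ℂ) * ((t + b t : ℝ) : ℂ))) * Complex.I_sq
  · rw [norm_mul, norm_mul, norm_exp_I_mul _ (by simp), mul_one, Complex.norm_real]
    refine mul_le_mul_of_nonneg_right ?_ (norm_nonneg _)
    refine (norm_add_le _ _).trans ?_
    rw [norm_mul, norm_mul]
    simp only [Real.norm_eq_abs]
    have h1 := mul_le_one₀ (abs_J1_le (k * (Astar + a t))) (abs_nonneg _)
      (abs_J1_le (j * (Astar + a t)))
    have h2 := mul_le_one₀ (abs_J1d_le (k * (Astar + a t))) (abs_nonneg _)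
      (abs_J1d_le (j * (Astar + a t)))
    linarith
  · have h1 := ((hS J1d abs_J1d_le t).hasSum.mul_left ((J1d ((k : ℝ) * (Astar + a t)) : ℝ) : ℂ))
    have h2 := ((hS J1 abs_J1_le t).hasSum.mul_left ((J1 ((k : ℝ) * (Astar + a t)) : ℝ) : ℂ))
    refine ((h1.add h2).mul_right
      (Complex.exp (-Complex.I * (k : ℂ) * ((t + b t : ℝ) : ℂ)))).congr_fun ?_
    intro j
    have he : Complex.exp (Complex.I * ((j : ℂ) - (k : ℂ)) * ((t + b t : ℝ) : ℂ))
        = Complex.exp (Complex.I * (j : ℂ) * ((t + b t : ℝ) : ℂ)) *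
          Complex.exp (-Complex.I * (k : ℂ) * ((t + b t : ℝ) : ℂ)) := by
      rw [← Complex.exp_add]
      congr 1
      ring
    rw [he]
    push_cast
    ring

lemma dSC_dSstar (Astar : ℝ) {a b : ℝ → ℝ} (ha : Continuous a) (hb : Continuous b) {γ : ℝ → ℝ}
    (h0 : fcR γ 0 = 0) (hsum : Summable fun j : ℤ => ‖fcR γ j‖) (x : ℝ) :
    dSC Astar a b (dSstar1 Astar a b γ) (dSstar2 Astar a b γ) x
      = Mop Astar a b (fun t => (γ t : ℂ)) x := by
  unfold dSC Mop
  rw [← tsum_mul_left]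
  refine tsum_congr fun k => ?_
  split_ifs with hk
  · rw [mul_zero]
  · rw [dS_coeff Astar ha hb h0 hsum k, mul_assoc, ← tsum_mul_right]
    congr 1
    refine tsum_congr fun j => ?_
    split_ifs with hj
    · rw [zero_mul]
    · rfl

/-- Orthogonality of the exponentials. -/
lemma integral_exp_int (n : ℤ) :
    ∫ t in (0:ℝ)..(2 * π), Complex.exp (Complex.I * (n : ℂ) * (t : ℂ))
      = if n = 0 then 2 * (π : ℂ) else 0 := by
  split_ifs with hn
  · simp [hn]
  · rw [integral_exp_mul_complex (mul_ne_zero Complex.I_ne_zero (Int.cast_ne_zero.2 hn))]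
    have hexp : Complex.exp (Complex.I * (n : ℂ) * ((2 * π : ℝ) : ℂ)) = 1 := by
      rw [Complex.exp_eq_one_iff]
      exact ⟨n, by push_cast; ring⟩
    rw [hexp]
    simp

lemma Mop_zero (Astar : ℝ) (γ : ℝ → ℝ) (x : ℝ) :
    Mop Astar (fun _ => 0) (fun _ => 0) (fun t => (γ t : ℂ)) x
          = 4 * (π : ℂ) ^ 2 * ∑' j : ℤ, if j = 0 then 0 else
              ((J1 ((j : ℝ) * Astar) ^ 2 + deriv J1 ((j : ℝ) * Astar) ^ 2 : ℝ) : ℂ) *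
                fcR γ j * Complex.exp (Complex.I * (j : ℂ) * (x : ℂ)) := by
  unfold Mop
  rw [← tsum_mul_left, ← tsum_mul_left]
  refine tsum_congr fun k => ?_
  by_cases hk : k = 0
  · simp [hk]
  rw [if_neg hk, if_neg hk]
  simp only [add_zero, intervalIntegral.integral_const_mul, ← Int.cast_sub, integral_exp_int]
  rw [tsum_eq_single k]
  · rw [if_neg hk, if_pos (sub_self k), fcR]
    push_cast
    ring
  · intro j hj
    rw [if_neg (sub_ne_zero.2 hj)]
    simp

/-! ### Diagonal operators on weighted sequence spaces -/

lemma jb_pos (j : ℤ) : 0 < jb j := lt_of_lt_of_le one_pos (le_max_left _ _)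

lemma jb_eq {j : ℤ} (hj : j ≠ 0) : jb j = |(j : ℝ)| := by
  refine max_eq_right ?_
  rw [← Int.cast_abs]
  exact_mod_cast Int.one_le_abs hj

/-- A coefficientwise bound `⟨j⟩^s |c_j| ≤ C ⟨j⟩^t |d_j|` passes to the sequence norms. -/
lemma seq_bound {s t C : ℝ} (hC : 0 ≤ C) {c d : ℤ → ℂ}
    (h : ∀ j, jb j ^ s * ‖c j‖ ≤ C * (jb j ^ t * ‖d j‖)) (hd : memSeq t d) :
    memSeq s c ∧ seqNorm s c ≤ C * seqNorm t d := by
  have hsq : ∀ (r : ℝ) (e : ℤ → ℂ) (j : ℤ),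
      jb j ^ (2 * r) * ‖e j‖ ^ 2 = (jb j ^ r * ‖e j‖) ^ 2 := by
    intro r e j
    rw [mul_pow, mul_comm 2 r, Real.rpow_mul (jb_pos j).le, Real.rpow_two]
  have h2 : ∀ j, jb j ^ (2 * s) * ‖c j‖ ^ 2 ≤ C ^ 2 * (jb j ^ (2 * t) * ‖d j‖ ^ 2) := by
    intro j
    rw [hsq, hsq, ← mul_pow]
    have := Real.rpow_nonneg (jb_pos j).le s
    exact pow_le_pow_left₀ (by positivity) (h j) 2
  have hnn : ∀ j, 0 ≤ jb j ^ (2 * s) * ‖c j‖ ^ 2 := fun j => by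
    rw [hsq]; positivity
  have hc : memSeq s c := Summable.of_nonneg_of_le hnn h2 (hd.mul_left (C ^ 2))
  refine ⟨hc, ?_⟩
  unfold seqNorm
  rw [show C = Real.sqrt (C ^ 2) from (Real.sqrt_sq hC).symm, ← Real.sqrt_mul (sq_nonneg C)]
  refine Real.sqrt_le_sqrt ?_
  rw [← tsum_mul_left]
  exact hc.tsum_le_tsum h2 (hd.mul_left (C ^ 2))

/-- The eigenvalue of `dS(0,0) ∘ dS(0,0)*` on `e^{ijx}` is comparable to `⟨j⟩⁻¹`. -/
lemma symbol_bounds (Astar : ℝ) (hA : 0 < Astar) : ∃ c C : ℝ, 0 < c ∧ 0 < C ∧ ∀ j : ℤ, j ≠ 0 →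
    c ≤ jb j * (4 * π ^ 2 * (J1 ((j : ℝ) * Astar) ^ 2 + deriv J1 ((j : ℝ) * Astar) ^ 2)) ∧
    jb j * (4 * π ^ 2 * (J1 ((j : ℝ) * Astar) ^ 2 + deriv J1 ((j : ℝ) * Astar) ^ 2)) ≤ C := by
  obtain ⟨c, C, hc, hC, h⟩ := bessel_bounds Astar hA
  refine ⟨4 * π ^ 2 / Astar * c, 4 * π ^ 2 / Astar * C, by positivity, by positivity,
    fun j hj => ?_⟩
  have hjA : Astar ≤ |(j : ℝ)| * Astar := by
    refine le_mul_of_one_le_left hA.le ?_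
    rw [← jb_eq hj]
    exact le_max_left _ _
  have hev : J1 ((j : ℝ) * Astar) ^ 2 + J1d ((j : ℝ) * Astar) ^ 2
      = J1 (|(j : ℝ)| * Astar) ^ 2 + J1d (|(j : ℝ)| * Astar) ^ 2 := by
    rcases abs_choice (j : ℝ) with h | h
    · rw [h]
    · rw [h, neg_mul, J1_neg, J1d_neg, neg_sq]
  obtain ⟨h1, h2⟩ := h _ hjA
  rw [deriv_J1, hev, jb_eq hj]
  have hEq : |(j : ℝ)| * (4 * π ^ 2 * (J1 (|(j : ℝ)| * Astar) ^ 2 + J1d (|(j : ℝ)| * Astar) ^ 2))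
      = 4 * π ^ 2 / Astar *
        (|(j : ℝ)| * Astar * (J1 (|(j : ℝ)| * Astar) ^ 2 + J1d (|(j : ℝ)| * Astar) ^ 2)) := by
    field_simp
  rw [hEq]
  constructor <;> gcongr

lemma rpow_shift (j : ℤ) (s : ℝ) : jb j ^ s = jb j ^ (s - 1) * jb j := by
  rw [Real.rpow_sub_one (jb_pos j).ne', div_mul_cancel₀ _ (jb_pos j).ne']

/-- explicit form of dS(a,b)∘dS(a,b)*, its diagonal form at (0,0), and
bounded invertibility H^{s-1}_0 → H^s_0 of dS(0,0)∘dS(0,0)*. -/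
theorem statement17 (Astar : ℝ) (hAstar : 0 < Astar) (a b : ℝ → ℝ)
    (ha : smoothPer a) (hb : smoothPer b) :
    (∀ γ : ℝ → ℝ, smoothPer γ → fcR γ 0 = 0 →
      (∀ x : ℝ, dSC Astar a b (dSstar1 Astar a b γ) (dSstar2 Astar a b γ) x
          = Mop Astar a b (fun t => (γ t : ℂ)) x) ∧
      (∀ x : ℝ, Mop Astar (fun _ => 0) (fun _ => 0) (fun t => (γ t : ℂ)) x
          = 4 * (π : ℂ) ^ 2 * ∑' j : ℤ, if j = 0 then 0 else
              ((J1 ((j : ℝ) * Astar) ^ 2 + deriv J1 ((j : ℝ) * Astar) ^ 2 : ℝ) : ℂ) *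
                fcR γ j * Complex.exp (Complex.I * (j : ℂ) * (x : ℂ)))) ∧
    (∀ s : ℝ, ∃ C : ℝ, 0 < C ∧
      (∀ γ : ℤ → ℂ, γ 0 = 0 → memSeq (s - 1) γ →
        memSeq s (fun j : ℤ =>
          ((4 * π ^ 2 * (J1 ((j : ℝ) * Astar) ^ 2 + deriv J1 ((j : ℝ) * Astar) ^ 2) : ℝ) : ℂ)
            * γ j) ∧
        seqNorm s (fun j : ℤ =>
          ((4 * π ^ 2 * (J1 ((j : ℝ) * Astar) ^ 2 + deriv J1 ((j : ℝ) * Astar) ^ 2) : ℝ) : ℂ)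
            * γ j) ≤ C * seqNorm (s - 1) γ) ∧
      (∀ j : ℤ, j ≠ 0 →
        (4 * π ^ 2 * (J1 ((j : ℝ) * Astar) ^ 2 + deriv J1 ((j : ℝ) * Astar) ^ 2) : ℝ) ≠ 0) ∧
      (∀ η : ℤ → ℂ, η 0 = 0 → memSeq s η →
        memSeq (s - 1) (fun j : ℤ => η j /
          ((4 * π ^ 2 * (J1 ((j : ℝ) * Astar) ^ 2 + deriv J1 ((j : ℝ) * Astar) ^ 2) : ℝ) : ℂ)) ∧
        seqNorm (s - 1) (fun j : ℤ => η j /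
          ((4 * π ^ 2 * (J1 ((j : ℝ) * Astar) ^ 2 + deriv J1 ((j : ℝ) * Astar) ^ 2) : ℝ) : ℂ))
          ≤ C * seqNorm s η)) := by
  refine ⟨fun γ hγ h0 => ⟨fun x => dSC_dSstar Astar ha.1.continuous hb.1.continuous h0
    (summable_fcR hγ h0) x, fun x => Mop_zero Astar γ x⟩, fun s => ?_⟩
  obtain ⟨c, C, hc, hC, hm⟩ := symbol_bounds Astar hAstar
  have hpos : ∀ j : ℤ, j ≠ 0 →
      0 < 4 * π ^ 2 * (J1 ((j : ℝ) * Astar) ^ 2 + deriv J1 ((j : ℝ) * Astar) ^ 2) := fun j hj =>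
    pos_of_mul_pos_right (hc.trans_le (hm j hj).1) (jb_pos j).le
  refine ⟨max C c⁻¹, lt_max_of_lt_left hC, fun γ h0 hγ => ?_, fun j hj => (hpos j hj).ne',
    fun η h0 hη => ?_⟩
  · refine seq_bound (hC.le.trans (le_max_left _ _)) (fun j => ?_) hγ
    rcases eq_or_ne j 0 with rfl | hj
    · simp [h0]
    have hp := hpos j hj
    have hmj := (hm j hj).2
    set m := 4 * π ^ 2 * (J1 ((j : ℝ) * Astar) ^ 2 + deriv J1 ((j : ℝ) * Astar) ^ 2)
    rw [norm_mul, Complex.norm_real, Real.norm_of_nonneg hp.le, rpow_shift j s]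
    have := Real.rpow_nonneg (jb_pos j).le (s - 1)
    calc jb j ^ (s - 1) * jb j * (m * ‖γ j‖) = (jb j * m) * (jb j ^ (s - 1) * ‖γ j‖) := by ring
      _ ≤ _ := by
        gcongr
        exact hmj.trans (le_max_left _ _)
  · refine seq_bound (hC.le.trans (le_max_left _ _)) (fun j => ?_) hη
    rcases eq_or_ne j 0 with rfl | hj
    · simp [h0]
    have hp := hpos j hj
    have hmj := (hm j hj).1
    set m := 4 * π ^ 2 * (J1 ((j : ℝ) * Astar) ^ 2 + deriv J1 ((j : ℝ) * Astar) ^ 2)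
    rw [norm_div, Complex.norm_real, Real.norm_of_nonneg hp.le, rpow_shift j s]
    have := Real.rpow_nonneg (jb_pos j).le (s - 1)
    have hj0 := jb_pos j
    calc jb j ^ (s - 1) * (‖η j‖ / m) = (jb j * m)⁻¹ * (jb j ^ (s - 1) * jb j * ‖η j‖) := by
          field_simp
      _ ≤ _ := by
        gcongr
        exact (inv_anti₀ hc hmj).trans (le_max_right _ _)
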